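/- Let b, σ : [0,∞) × ℝ → ℝ with b globally Lipschitz in (t,x), σ continuously differentiable with σ, ∂σ/∂t, ∂σ/∂x globally Lipschitz in (t,x). Let g ∈ C^γ(ℝ) with 1/2 < γ ≤ 1. Then for every T > 0 and every β with 1 − γ < β < γ, the equation x(t) = x₀ + ∫₀ᵗ b(τ, x(τ)) dτ + ∫₀ᵗ σ(τ, x(τ)) dg(τ) has a unique solution x ∈ C^β([0,T]), where the second integral is a Young–Stieltjes integral. -/

import Mathlib

open Set Finset intervalIntegral

/-- Left-endpoint Riemann–Stieltjes sum. -/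
noncomputable def RSsum (f g : ℝ → ℝ) (n : ℕ) (t : Fin (n + 1) → ℝ) : ℝ :=
  ∑ i : Fin n, f (t i.castSucc) * (g (t i.succ) - g (t i.castSucc))

/-- `I` is the (Young–)Riemann–Stieltjes integral `∫_a^b f dg`. -/
def IsRSIntegral (f g : ℝ → ℝ) (a b I : ℝ) : Prop :=
  ∀ ε > 0, ∃ δ > 0, ∀ (n : ℕ) (t : Fin (n + 1) → ℝ),
    Monotone t → t 0 = a → t (Fin.last n) = b →
    (∀ i : Fin n, t i.succ - t i.castSucc < δ) →
    |RSsum f g n t - I| < ε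

/-- `x` solves `x(t) = x₀ + ∫₀ᵗ b(τ,x(τ)) dτ + ∫₀ᵗ σ(τ,x(τ)) dg(τ)` on `[0,T]`,
belonging to `C^β([0,T])`. -/
def IsSolution (b σ : ℝ → ℝ → ℝ) (g : ℝ → ℝ) (x₀ T β : ℝ) (x : ℝ → ℝ) : Prop :=
  (∃ C : ℝ, ∀ t₁ ∈ Icc (0 : ℝ) T, ∀ t₂ ∈ Icc (0 : ℝ) T,
      |x t₂ - x t₁| ≤ C * |t₂ - t₁| ^ β) ∧
  ∀ t ∈ Icc (0 : ℝ) T, ∃ I : ℝ,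
    IsRSIntegral (fun τ => σ τ (x τ)) g 0 t I ∧
    x t = x₀ + (∫ τ in (0 : ℝ)..t, b τ (x τ)) + I

/-
For `f` of class `C^β` and `g` of class `C^γ` with `β + γ > 1`, the sewing lemma produces `∫ f dg`
with `|∫ₛᵗ f dg - f(s) (g(t) - g(s))| ≲ (t - s) ^ (β + γ)`. Measure a path by its `β`-Hölder
increments over windows of length at most `h`, weighted by `exp (t / h)`. Integration against `dτ`
and `dg` then gains a factor `h ^ (γ - β)` over all of `[0, T]`, because the weight also makes the
sup norm of a path vanishing at `0` comparable with this seminorm, uniformly in `h`. For small `h`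
the Picard map therefore preserves the unit ball. It halves the seminorm of `x - y` for `x` and `y`
with a common Hölder bound: the increments of `σ(τ, x) - σ(τ, y)` are controlled by those of
`x - y` since `∂σ/∂x` is Lipschitz. So the Picard iterates converge and solutions are unique.
-/

open scoped NNReal Topology
open Filter

section Sewing

variable {E : Type*} [NormedAddCommGroup E] {A : ℝ → ℝ → E} {K : ℝ≥0} {θ : ℝ} {I : Set ℝ}

/-- The two-parameter germ `A` is additive on ordered triples of `I` up to an error of order `θ`.
For `θ > 1` this is the hypothesis of the sewing lemma. -/
def IsAlmostAdditiveOn (A : ℝ → ℝ → E) (K : ℝ≥0) (θ : ℝ) (I : Set ℝ) : Prop :=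
  ∀ ⦃u⦄, u ∈ I → ∀ ⦃v⦄, v ∈ I → ∀ ⦃w⦄, w ∈ I → u ≤ v → v ≤ w →
    ‖A u w - A u v - A v w‖ ≤ K * (w - u) ^ θ

/-- The increments of `J` agree with the germ `A` on `I` up to an error of order `θ`; for `θ > 1`
this says that `J` is an indefinite integral of `A`. -/
def IsSewingOn (A : ℝ → ℝ → E) (D θ : ℝ) (I : Set ℝ) (J : ℝ → E) : Prop :=
  ∀ ⦃s⦄, s ∈ I → ∀ ⦃t⦄, t ∈ I → s ≤ t → ‖J t - J s - A s t‖ ≤ D * (t - s) ^ θ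

/-- The constant of the sewing lemma, the solution of `C = 2 * (C * (1 / 2) ^ θ) + 2`. -/
noncomputable def sewingConst (θ : ℝ) : ℝ := 2 / (1 - 2 * (1 / 2) ^ θ)

lemma two_mul_half_rpow_lt_one (hθ : 1 < θ) : 2 * (1 / 2 : ℝ) ^ θ < 1 := by
  have : (1 / 2 : ℝ) ^ θ < (1 / 2) ^ (1 : ℝ) :=
    Real.rpow_lt_rpow_of_exponent_gt (by norm_num) (by norm_num) hθ
  rw [Real.rpow_one] at this
  linarith

lemma sewingConst_pos (hθ : 1 < θ) : 0 < sewingConst θ :=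
  div_pos two_pos (sub_pos.2 (two_mul_half_rpow_lt_one hθ))

lemma two_mul_sewingConst_add_two (hθ : 1 < θ) :
    2 * (sewingConst θ * (1 / 2) ^ θ) + 2 = sewingConst θ := by
  have := (sub_pos.2 (two_mul_half_rpow_lt_one hθ)).ne'
  rw [sewingConst]
  field_simp
  ring

lemma exists_le_and_le_succ {α : Type*} [LinearOrder α] {t : ℕ → α} {m : α} {a b : ℕ}
    (hab : a < b) (ha : t a ≤ m) (hb : m ≤ t b) :
    ∃ j, a ≤ j ∧ j < b ∧ t j ≤ m ∧ m ≤ t (j + 1) := by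
  induction b, hab using Nat.le_induction with
  | base => exact ⟨a, le_rfl, a.lt_succ_self, ha, hb⟩
  | succ b hab ih =>
    rcases le_total m (t b) with hm | hm
    · obtain ⟨j, haj, hjb, hj⟩ := ih hm
      exact ⟨j, haj, hjb.trans b.lt_succ_self, hj⟩
    · exact ⟨b, (Nat.lt_of_succ_le hab).le, b.lt_succ_self, hm, hb⟩

lemma sewingConst_mul_rpow_le {d L : ℝ} (hθ : 1 < θ) (hd : 0 ≤ d) (hL : 0 ≤ L)
    (hdL : d ≤ 1 / 2 * L) :
    sewingConst θ * K * d ^ θ ≤ sewingConst θ * (1 / 2) ^ θ * K * L ^ θ := by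
  have hC := sewingConst_pos hθ
  calc sewingConst θ * K * d ^ θ ≤ sewingConst θ * K * (1 / 2 * L) ^ θ := by gcongr
    _ = sewingConst θ * (1 / 2) ^ θ * K * L ^ θ := by
      rw [Real.mul_rpow (by norm_num) hL]
      ring

lemma IsAlmostAdditiveOn.norm_sub_three_le (hA : IsAlmostAdditiveOn A K θ I) (hθ : 0 ≤ θ)
    {a u v b : ℝ} (ha : a ∈ I) (hu : u ∈ I) (hv : v ∈ I) (hb : b ∈ I) (hau : a ≤ u)
    (huv : u ≤ v) (hvb : v ≤ b) :
    ‖A a b - A a u - A u v - A v b‖ ≤ 2 * K * (b - a) ^ θ := by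
  have shorter : (b - u) ^ θ ≤ (b - a) ^ θ := by
    gcongr
    linarith
  calc ‖A a b - A a u - A u v - A v b‖
      = ‖(A a b - A a u - A u b) + (A u b - A u v - A v b)‖ := by congr 1; abel
    _ ≤ K * (b - a) ^ θ + K * (b - u) ^ θ :=
      norm_add_le_of_le (hA ha hu hb hau (huv.trans hvb)) (hA hu hv hb huv hvb)
    _ ≤ K * (b - a) ^ θ + K * (b - a) ^ θ := by gcongr
    _ = 2 * K * (b - a) ^ θ := by ring

/- The index interval is cut at the cell containing the midpoint of `[t a, t b]`: both remaining
pieces have at most half the length, so `θ > 1` lets the induction hypothesis absorb the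
additivity defect. -/
theorem IsAlmostAdditiveOn.norm_sum_Ico_sub_le (hA : IsAlmostAdditiveOn A K θ I) (hθ : 1 < θ)
    {t : ℕ → ℝ} (ht : Monotone t) {a b : ℕ} (hab : a ≤ b) (htI : ∀ i, a ≤ i → i ≤ b → t i ∈ I) :
    ‖∑ i ∈ Finset.Ico a b, A (t i) (t (i + 1)) - A (t a) (t b)‖ ≤
      sewingConst θ * K * (t b - t a) ^ θ := by
  induction hn : b - a using Nat.strong_induction_on generalizing a b with
  | _ n ih =>
  have hθ0 : 0 < θ := one_pos.trans hθ
  rcases hab.eq_or_lt with rfl | hlt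
  · simpa [Real.zero_rpow hθ0.ne'] using
      hA (htI a le_rfl le_rfl) (htI a le_rfl le_rfl) (htI a le_rfl le_rfl) le_rfl le_rfl
  have htab := ht hab
  obtain ⟨j, haj, hjb, hj, hj'⟩ :=
    exists_le_and_le_succ (t := t) (m := (t a + t b) / 2) hlt (by linarith) (by linarith)
  have hta := ht haj
  have htj : t j ≤ t (j + 1) := ht j.le_succ
  have htb : t (j + 1) ≤ t b := ht hjb
  have defect := hA.norm_sub_three_le hθ0.le (htI a le_rfl hab) (htI j haj hjb.le)
    (htI (j + 1) (by omega) hjb) (htI b hab le_rfl) hta htj htb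
  have left := (ih (j - a) (by omega) haj (fun i hi hi' => htI i hi (by omega)) rfl).trans
    (sewingConst_mul_rpow_le hθ (by linarith) (sub_nonneg.2 htab) (by linarith))
  have right := (ih (b - (j + 1)) (by omega) hjb (fun i hi hi' => htI i (by omega) hi') rfl).trans
    (sewingConst_mul_rpow_le hθ (by linarith) (sub_nonneg.2 htab) (by linarith))
  have split : ∑ i ∈ Finset.Ico a b, A (t i) (t (i + 1)) - A (t a) (t b) =
      (∑ i ∈ Finset.Ico a j, A (t i) (t (i + 1)) - A (t a) (t j)) +
      (∑ i ∈ Finset.Ico (j + 1) b, A (t i) (t (i + 1)) - A (t (j + 1)) (t b)) -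
      (A (t a) (t b) - A (t a) (t j) - A (t j) (t (j + 1)) - A (t (j + 1)) (t b)) := by
    rw [← Finset.sum_Ico_consecutive _ haj hjb.le, Finset.sum_eq_sum_Ico_succ_bot hjb]
    abel
  calc _ ≤ sewingConst θ * (1 / 2) ^ θ * K * (t b - t a) ^ θ +
        sewingConst θ * (1 / 2) ^ θ * K * (t b - t a) ^ θ + 2 * K * (t b - t a) ^ θ := by
        rw [split]
        exact norm_sub_le_of_le (norm_add_le_of_le left right) defect
    _ = (2 * (sewingConst θ * (1 / 2) ^ θ) + 2) * K * (t b - t a) ^ θ := by ring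
    _ = _ := by rw [two_mul_sewingConst_add_two hθ]

lemma exists_monotone_range_eq {α : Type*} [LinearOrder α] {F : Finset α} (hF : F.Nonempty) :
    ∃ t : ℕ → α, Monotone t ∧ range t = F := by
  have hlt (i : ℕ) : min i (F.card - 1) < F.card :=
    (min_le_right _ _).trans_lt (Nat.sub_one_lt hF.card_ne_zero)
  refine ⟨fun i => F.orderEmbOfFin rfl ⟨min i (F.card - 1), hlt i⟩, fun i j hij => ?_, ?_⟩
  · exact (F.orderEmbOfFin rfl).monotone (Fin.mk_le_mk.2 (min_le_min_right _ hij))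
  · rw [← F.range_orderEmbOfFin rfl]
    refine Subset.antisymm (range_subset_iff.2 fun i => mem_range_self _) ?_
    rintro _ ⟨i, rfl⟩
    exact ⟨i, by simp [min_eq_left (Nat.le_sub_one_of_lt i.isLt)]⟩

lemma IsAlmostAdditiveOn.exists_isSewingOn_finset (hA : IsAlmostAdditiveOn A K θ I) (hθ : 1 < θ)
    {F : Finset ℝ} (hF : ↑F ⊆ I) :
    ∃ J, IsSewingOn A (sewingConst θ * K) θ F J := by
  rcases F.eq_empty_or_nonempty with rfl | hne
  · exact ⟨0, fun s hs => by simp at hs⟩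
  obtain ⟨t, ht, htF⟩ := exists_monotone_range_eq hne
  have htI (i : ℕ) : t i ∈ I := hF (htF ▸ mem_range_self i)
  have hex (x : ℝ) (hx : x ∈ (F : Set ℝ)) : ∃ i, t i = x := by rwa [← htF] at hx
  choose! idx hidx using hex
  refine ⟨fun x => ∑ i ∈ Finset.range (idx x), A (t i) (t (i + 1)), fun u hu v hv huv => ?_⟩
  have hle : idx u ≤ idx v := by
    rcases huv.eq_or_lt with rfl | hlt
    · exact le_rfl
    · exact (ht.reflect_lt (by rwa [hidx u hu, hidx v hv])).le
  have := hA.norm_sum_Ico_sub_le hθ ht hle fun i _ _ => htI i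
  rwa [hidx u hu, hidx v hv, Finset.sum_Ico_eq_sub _ hle] at this

lemma sum_succ_sub_castSucc {G : Type*} [AddCommGroup G] {n : ℕ} (φ : Fin (n + 1) → G) :
    ∑ i : Fin n, (φ i.succ - φ i.castSucc) = φ (Fin.last n) - φ 0 := by
  have := (Fin.sum_univ_succ φ).symm.trans (Fin.sum_univ_castSucc φ)
  rw [Finset.sum_sub_distrib, sub_eq_sub_iff_add_eq_add, add_comm, this, add_comm]

lemma IsSewingOn.mono {J : ℝ → E} {D : ℝ} {I' : Set ℝ} (hJ : IsSewingOn A D θ I J)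
    (hI : I' ⊆ I) : IsSewingOn A D θ I' J :=
  fun _ hs _ ht => hJ (hI hs) (hI ht)

lemma IsSewingOn.norm_sum_sub_le {J : ℝ → E} {D δ : ℝ} (hJ : IsSewingOn A D θ I J) (hD : 0 ≤ D)
    (hθ : 1 ≤ θ) {n : ℕ} {t : Fin (n + 1) → ℝ} (ht : Monotone t) (htI : ∀ i, t i ∈ I)
    (hmesh : ∀ i : Fin n, t i.succ - t i.castSucc ≤ δ) :
    ‖∑ i : Fin n, A (t i.castSucc) (t i.succ) - (J (t (Fin.last n)) - J (t 0))‖ ≤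
      D * δ ^ (θ - 1) * (t (Fin.last n) - t 0) := by
  have cell (i : Fin n) : ‖A (t i.castSucc) (t i.succ) - (J (t i.succ) - J (t i.castSucc))‖ ≤
      D * δ ^ (θ - 1) * (t i.succ - t i.castSucc) := by
    have hi : t i.castSucc ≤ t i.succ := ht i.castSucc_lt_succ.le
    set d := t i.succ - t i.castSucc
    have hd : 0 ≤ d := sub_nonneg.2 hi
    calc _ ≤ D * d ^ θ := by rw [norm_sub_rev]; exact hJ (htI _) (htI _) hi
      _ = D * d ^ (θ - 1) * d := by
        rw [mul_assoc, ← Real.rpow_add_one' hd (by linarith), sub_add_cancel]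
      _ ≤ D * δ ^ (θ - 1) * d := by
        gcongr
        exact hmesh i
  rw [← sum_succ_sub_castSucc t, ← sum_succ_sub_castSucc fun i => J (t i),
    ← Finset.sum_sub_distrib, Finset.mul_sum]
  exact norm_sum_le_of_le _ fun i _ => cell i

/-- The points `a + i (b - a) / n`, which for `i ≤ n` cut `[a, b]` into `n` equal cells. -/
noncomputable def uniformPartition (a b : ℝ) (n i : ℕ) : ℝ := a + i * ((b - a) / n)

section UniformPartition

variable {a b : ℝ} {n : ℕ}

@[simp]
lemma uniformPartition_zero : uniformPartition a b n 0 = a := by simp [uniformPartition]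

lemma uniformPartition_self (hn : n ≠ 0) : uniformPartition a b n n = b := by
  have : (n : ℝ) ≠ 0 := Nat.cast_ne_zero.2 hn
  rw [uniformPartition]
  field_simp
  ring

lemma uniformPartition_succ_sub (i : ℕ) :
    uniformPartition a b n (i + 1) - uniformPartition a b n i = (b - a) / n := by
  simp only [uniformPartition, Nat.cast_add_one]
  ring

lemma monotone_uniformPartition (hab : a ≤ b) : Monotone (uniformPartition a b n) :=
  monotone_nat_of_le_succ fun i => by
    rw [← sub_nonneg, uniformPartition_succ_sub]
    exact div_nonneg (sub_nonneg.2 hab) n.cast_nonneg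

lemma uniformPartition_mem_Icc (hab : a ≤ b) (hn : n ≠ 0) {i : ℕ} (hi : i ≤ n) :
    uniformPartition a b n i ∈ Set.Icc a b := by
  have hmono := monotone_uniformPartition (n := n) hab
  constructor
  · simpa using hmono i.zero_le
  · simpa [uniformPartition_self hn] using hmono hi

end UniformPartition

lemma IsSewingOn.norm_sum_uniformPartition_sub_le {J : ℝ → E} {D a b : ℝ}
    (hJ : IsSewingOn A D θ I J) (hD : 0 ≤ D) (hθ : 1 ≤ θ) (hab : a ≤ b) {n : ℕ} (hn : n ≠ 0)
    (hI : ∀ i ≤ n, uniformPartition a b n i ∈ I) :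
    ‖∑ i : Fin n, A (uniformPartition a b n i) (uniformPartition a b n (i + 1)) - (J b - J a)‖ ≤
      D * ((b - a) / n) ^ (θ - 1) * (b - a) := by
  have := hJ.norm_sum_sub_le (t := fun i : Fin (n + 1) => uniformPartition a b n i) hD hθ
    (fun i j hij => monotone_uniformPartition hab hij) (fun i => hI i i.is_le)
    fun i => (uniformPartition_succ_sub (i : ℕ)).le
  simpa [uniformPartition_self hn] using this

lemma tendsto_mul_rpow_mul_nhds_zero {e : ℝ} (he : 0 < e) (C d : ℝ) :
    Tendsto (fun δ : ℝ => C * δ ^ e * d) (𝓝 0) (𝓝 0) := by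
  have h := ((Real.continuous_rpow_const he.le).tendsto 0).const_mul C |>.mul_const d
  rwa [Real.zero_rpow he.ne', mul_zero, zero_mul] at h

/- Both sewings are compared with the sums of `A` over a fine uniform partition of `[a, x]`. -/
lemma cauchySeq_of_isSewingOn_finset {D a b x : ℝ} (hD : 0 ≤ D) (hθ : 1 < θ)
    (hx : x ∈ Set.Icc a b) {J : Finset ℝ → ℝ → E}
    (hJ : ∀ F : Finset ℝ, IsSewingOn A D θ (F ∩ Set.Icc a b) (J F)) :
    CauchySeq fun F => J F x - J F a := by
  classical
  refine Metric.cauchySeq_iff.2 fun ε hε => ?_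
  obtain ⟨n, hnε, hn⟩ :=
    ((((tendsto_mul_rpow_mul_nhds_zero (sub_pos.2 hθ) D (x - a)).comp
      (tendsto_const_div_atTop_nhds_zero_nat (x - a))).eventually
      (gt_mem_nhds (half_pos hε))).and (eventually_ne_atTop 0)).exists
  let grid := (Finset.range (n + 1)).image (uniformPartition a x n)
  let gridSum := ∑ i : Fin n, A (uniformPartition a x n i) (uniformPartition a x n (i + 1))
  have near (F : Finset ℝ) (hF : F ≥ grid) : dist gridSum (J F x - J F a) < ε / 2 := by
    rw [dist_eq_norm]
    refine ((hJ F).norm_sum_uniformPartition_sub_le hD hθ.le hx.1 hn fun i hi => ?_).trans_lt hnε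
    exact ⟨hF (Finset.mem_image_of_mem _ (Finset.mem_range_succ_iff.2 hi)),
      Set.Icc_subset_Icc_right hx.2 (uniformPartition_mem_Icc hx.1 hn hi)⟩
  refine ⟨grid, fun F hF F' hF' => (dist_triangle_left _ _ gridSum).trans_lt ?_⟩
  linarith [near F hF, near F' hF']

theorem IsAlmostAdditiveOn.exists_isSewingOn [CompleteSpace E] {a b : ℝ}
    (hA : IsAlmostAdditiveOn A K θ (Set.Icc a b)) (hθ : 1 < θ) :
    ∃ J, IsSewingOn A (sewingConst θ * K) θ (Set.Icc a b) J := by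
  classical
  have hD : 0 ≤ sewingConst θ * K := mul_nonneg (sewingConst_pos hθ).le K.coe_nonneg
  have exists_finset (F : Finset ℝ) :
      ∃ J, IsSewingOn A (sewingConst θ * K) θ (F ∩ Set.Icc a b) J := by
    have coe_filter : (F.filter (· ∈ Set.Icc a b) : Set ℝ) = ↑F ∩ Set.Icc a b := by
      ext
      simp
    rw [← coe_filter]
    exact hA.exists_isSewingOn_finset hθ fun x hx => (Finset.mem_filter.1 hx).2
  choose J hJ using exists_finset
  have exists_limit : ∀ x ∈ Set.Icc a b, ∃ l, Tendsto (fun F => J F x - J F a) atTop (𝓝 l) :=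
    fun x hx => cauchySeq_tendsto_of_complete (cauchySeq_of_isSewingOn_finset hD hθ hx hJ)
  choose! Jlim hJlim using exists_limit
  refine ⟨Jlim, fun s hs t ht hst => ?_⟩
  refine le_of_tendsto (((hJlim t ht).sub (hJlim s hs)).sub_const (A s t)).norm ?_
  filter_upwards [eventually_ge_atTop {s, t}] with F hF
  rw [sub_sub_sub_cancel_right]
  exact hJ F ⟨hF (by simp), hs⟩ ⟨hF (by simp), ht⟩ hst

end Sewing

section Young

variable {f f₁ f₂ g : ℝ → ℝ} {β γ K G : ℝ≥0} {a b I I₁ I₂ : ℝ}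

lemma holderOnWith_iff_norm_sub_le {E : Type*} [SeminormedAddCommGroup E] {z : ℝ → E} {S : Set ℝ}
    {C r : ℝ≥0} :
    HolderOnWith C r z S ↔
      ∀ s ∈ S, ∀ t ∈ S, s ≤ t → ‖z t - z s‖ ≤ C * (t - s) ^ (r : ℝ) := by
  have dist_iff : HolderOnWith C r z S ↔
      ∀ s ∈ S, ∀ t ∈ S, dist (z s) (z t) ≤ C * dist s t ^ (r : ℝ) := by
    refine ⟨fun h s hs t ht => h.dist_le hs ht, fun h s hs t ht => ?_⟩
    rw [edist_dist, edist_dist, ENNReal.ofReal_rpow_of_nonneg dist_nonneg r.coe_nonneg,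
      ← ENNReal.ofReal_coe_nnreal, ← ENNReal.ofReal_mul C.coe_nonneg]
    exact ENNReal.ofReal_le_ofReal (h s hs t ht)
  refine dist_iff.trans ⟨fun h s hs t ht hst => ?_, fun h s hs t ht => ?_⟩
  · simpa [dist_eq_norm, abs_of_nonneg (sub_nonneg.2 hst)] using h t ht s hs
  · rcases le_total s t with hst | hts
    · rw [dist_comm, dist_comm s, dist_eq_norm, Real.dist_eq, abs_of_nonneg (sub_nonneg.2 hst)]
      exact h s hs t ht hst
    · rw [dist_eq_norm, Real.dist_eq, abs_of_nonneg (sub_nonneg.2 hts)]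
      exact h t ht s hs hts

/-- The germ `f u (g v - g u)` of `∫ f dg`: the summand of `RSsum`, in the form to which the sewing
lemma applies. -/
def youngGerm (f g : ℝ → ℝ) (u v : ℝ) : ℝ := f u * (g v - g u)

lemma isAlmostAdditiveOn_youngGerm {S : Set ℝ} (hf : HolderOnWith K β f S)
    (hg : HolderOnWith G γ g S) :
    IsAlmostAdditiveOn (youngGerm f g) (K * G) (β + γ) S := by
  intro u hu v hv w hw huv hvw
  have hKG : 0 ≤ (K : ℝ) * (w - u) ^ (β : ℝ) :=
    mul_nonneg K.coe_nonneg (Real.rpow_nonneg (by linarith) _)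
  calc ‖youngGerm f g u w - youngGerm f g u v - youngGerm f g v w‖
      = ‖f v - f u‖ * ‖g w - g v‖ := by
        rw [← norm_mul, ← norm_neg]; simp only [youngGerm]; ring_nf
    _ ≤ (K * (v - u) ^ (β : ℝ)) * (G * (w - v) ^ (γ : ℝ)) := by
        gcongr
        · exact holderOnWith_iff_norm_sub_le.1 hf u hu v hv huv
        · exact holderOnWith_iff_norm_sub_le.1 hg v hv w hw hvw
    _ ≤ (K * (w - u) ^ (β : ℝ)) * (G * (w - u) ^ (γ : ℝ)) := by
        gcongr
    _ = (K * G : ℝ≥0) * (w - u) ^ (β + γ : ℝ) := by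
        rw [Real.rpow_add_of_nonneg (by linarith) β.coe_nonneg γ.coe_nonneg, NNReal.coe_mul]
        ring

lemma exists_isSewingOn_youngGerm (hf : HolderOnWith K β f (Set.Icc a b))
    (hg : HolderOnWith G γ g (Set.Icc a b)) (hβγ : 1 < (β + γ : ℝ)) :
    ∃ J, IsSewingOn (youngGerm f g) (sewingConst (β + γ) * (K * G : ℝ≥0)) (β + γ)
      (Set.Icc a b) J :=
  (isAlmostAdditiveOn_youngGerm hf hg).exists_isSewingOn hβγ

lemma IsSewingOn.isRSIntegral {J : ℝ → ℝ} {D θ : ℝ} (hD : 0 ≤ D) (hθ : 1 < θ)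
    (hJ : IsSewingOn (youngGerm f g) D θ (Set.Icc a b) J) :
    IsRSIntegral f g a b (J b - J a) := by
  intro ε hε
  have small := (tendsto_mul_rpow_mul_nhds_zero (sub_pos.2 hθ) D (b - a)).eventually
    (gt_mem_nhds hε)
  obtain ⟨δ, hδε, hδ⟩ :=
    ((small.filter_mono nhdsWithin_le_nhds).and (self_mem_nhdsWithin (s := Ioi 0))).exists
  refine ⟨δ, hδ, fun n t ht h0 hn hmesh => ?_⟩
  have := hJ.norm_sum_sub_le hD hθ.le ht
    (fun i => ⟨h0 ▸ ht i.zero_le, hn ▸ ht i.le_last⟩) fun i => (hmesh i).le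
  rw [h0, hn] at this
  exact this.trans_lt hδε

lemma exists_isRSIntegral (hf : HolderOnWith K β f (Set.Icc a b))
    (hg : HolderOnWith G γ g (Set.Icc a b)) (hβγ : 1 < (β + γ : ℝ)) :
    ∃ I, IsRSIntegral f g a b I :=
  have ⟨_, hJ⟩ := exists_isSewingOn_youngGerm hf hg hβγ
  ⟨_, hJ.isRSIntegral (mul_nonneg (sewingConst_pos hβγ).le NNReal.zero_le_coe) hβγ⟩

lemma IsRSIntegral.tendsto_sum_uniformPartition (h : IsRSIntegral f g a b I) (hab : a ≤ b) :
    Tendsto (fun n : ℕ => RSsum f g n fun i => uniformPartition a b n i) atTop (𝓝 I) := by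
  refine Metric.tendsto_nhds.2 fun ε hε => ?_
  obtain ⟨δ, hδ, H⟩ := h ε hε
  filter_upwards [(tendsto_const_div_atTop_nhds_zero_nat (b - a)).eventually (gt_mem_nhds hδ),
    eventually_ne_atTop 0] with n hnδ hn
  refine H n _ (fun i j hij => monotone_uniformPartition hab hij) ?_ ?_ fun i => ?_
  · simp
  · simp [uniformPartition_self hn]
  · simpa [uniformPartition_succ_sub] using hnδ

lemma IsRSIntegral.unique (hab : a ≤ b) (h₁ : IsRSIntegral f g a b I₁)
    (h₂ : IsRSIntegral f g a b I₂) : I₁ = I₂ :=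
  tendsto_nhds_unique (h₁.tendsto_sum_uniformPartition hab) (h₂.tendsto_sum_uniformPartition hab)

lemma isRSIntegral_self : IsRSIntegral f g a a 0 := by
  refine fun ε hε => ⟨1, one_pos, fun n t ht h0 hn _ => ?_⟩
  have ht_eq (i) : t i = a := le_antisymm (hn ▸ ht i.le_last) (h0 ▸ ht i.zero_le)
  simpa [RSsum, ht_eq] using hε

lemma IsRSIntegral.sub (h₁ : IsRSIntegral f₁ g a b I₁) (h₂ : IsRSIntegral f₂ g a b I₂) :
    IsRSIntegral (f₁ - f₂) g a b (I₁ - I₂) := by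
  intro ε hε
  obtain ⟨δ₁, hδ₁, H₁⟩ := h₁ (ε / 2) (half_pos hε)
  obtain ⟨δ₂, hδ₂, H₂⟩ := h₂ (ε / 2) (half_pos hε)
  refine ⟨min δ₁ δ₂, lt_min hδ₁ hδ₂, fun n t ht h0 hn hmesh => ?_⟩
  have close₁ := H₁ n t ht h0 hn fun i => (hmesh i).trans_le (min_le_left _ _)
  have close₂ := H₂ n t ht h0 hn fun i => (hmesh i).trans_le (min_le_right _ _)
  have RSsum_sub : RSsum (f₁ - f₂) g n t = RSsum f₁ g n t - RSsum f₂ g n t := by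
    simp only [RSsum, Pi.sub_apply, sub_mul, Finset.sum_sub_distrib]
  rw [RSsum_sub, sub_sub_sub_comm]
  linarith [abs_sub (RSsum f₁ g n t - I₁) (RSsum f₂ g n t - I₂)]

lemma IsRSIntegral.sub_left {s t Is It : ℝ} (has : a ≤ s) (hst : s ≤ t)
    (hs : IsRSIntegral f g a s Is) (ht : IsRSIntegral f g a t It)
    (hf : HolderOnWith K β f (Set.Icc a t)) (hg : HolderOnWith G γ g (Set.Icc a t))
    (hβγ : 1 < (β + γ : ℝ)) :
    IsRSIntegral f g s t (It - Is) := by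
  obtain ⟨J, hJ⟩ := exists_isSewingOn_youngGerm hf hg hβγ
  have hD : 0 ≤ sewingConst (β + γ) * (K * G : ℝ≥0) :=
    mul_nonneg (sewingConst_pos hβγ).le NNReal.zero_le_coe
  rw [ht.unique (has.trans hst) (hJ.isRSIntegral hD hβγ), hs.unique has
    ((hJ.mono (Set.Icc_subset_Icc_right hst)).isRSIntegral hD hβγ), sub_sub_sub_cancel_right]
  exact (hJ.mono (Set.Icc_subset_Icc_left has)).isRSIntegral hD hβγ

lemma IsRSIntegral.abs_sub_youngGerm_le (h : IsRSIntegral f g a b I) (hab : a ≤ b)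
    (hf : HolderOnWith K β f (Set.Icc a b)) (hg : HolderOnWith G γ g (Set.Icc a b))
    (hβγ : 1 < (β + γ : ℝ)) :
    |I - youngGerm f g a b| ≤ sewingConst (β + γ) * (K * G) * (b - a) ^ (β + γ : ℝ) := by
  obtain ⟨J, hJ⟩ := exists_isSewingOn_youngGerm hf hg hβγ
  have hD : 0 ≤ sewingConst (β + γ) * (K * G : ℝ≥0) :=
    mul_nonneg (sewingConst_pos hβγ).le NNReal.zero_le_coe
  rw [h.unique hab (hJ.isRSIntegral hD hβγ)]
  exact hJ (left_mem_Icc.2 hab) (right_mem_Icc.2 hab) hab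

end Young

section WeightedHolder

variable {E : Type*} [NormedAddCommGroup E] {T h : ℝ} {β N N₁ N₂ : ℝ≥0} {z z₁ z₂ : ℝ → E}

/-- `z` has weighted `β`-Hölder seminorm at most `N` on `[0, T]`. Only increments over windows of
length at most `h` are tested, and they may grow exponentially at rate `1 / h`: a Picard step
contracts this seminorm on the whole of `[0, T]` once `h` is small. -/
def IsWeightedHolder (T h : ℝ) (β N : ℝ≥0) (z : ℝ → E) : Prop :=
  ∀ ⦃s t⦄, 0 ≤ s → s ≤ t → t ≤ T → t - s ≤ h →
    ‖z t - z s‖ ≤ N * Real.exp (t / h) * (t - s) ^ (β : ℝ)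

namespace IsWeightedHolder

lemma sub (hz₁ : IsWeightedHolder T h β N₁ z₁) (hz₂ : IsWeightedHolder T h β N₂ z₂) :
    IsWeightedHolder T h β (N₁ + N₂) (z₁ - z₂) := by
  intro s t hs hst htT hsh
  simp only [Pi.sub_apply, sub_sub_sub_comm (z₁ t)]
  refine (norm_sub_le_of_le (hz₁ hs hst htT hsh) (hz₂ hs hst htT hsh)).trans_eq ?_
  push_cast
  ring

/- Stepping back by `h` divides the bound by `e ≥ 2`, so `2 N` dominates the geometric series. -/
lemma norm_sub_zero_le (hz : IsWeightedHolder T h β N z) (hh : 0 < h) (hh1 : h ≤ 1) {t : ℝ}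
    (ht : t ∈ Set.Icc 0 T) : ‖z t - z 0‖ ≤ 2 * N * Real.exp (t / h) := by
  obtain ⟨n, hn⟩ := exists_nat_ge (t / h)
  rw [div_le_iff₀ hh] at hn
  induction n generalizing t with
  | zero =>
    obtain rfl : t = 0 := le_antisymm (by simpa using hn) ht.1
    rw [sub_self, norm_zero]
    positivity
  | succ n ih =>
    have window {s : ℝ} (hs : 0 ≤ s) (hst : s ≤ t) (hsh : t - s ≤ h) :
        ‖z t - z s‖ ≤ N * Real.exp (t / h) :=
      (hz hs hst ht.2 hsh).trans <| mul_le_of_le_one_right (by positivity) <|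
        Real.rpow_le_one (sub_nonneg.2 hst) (hsh.trans hh1) β.coe_nonneg
    rcases le_total t h with hth | hht
    · refine (window le_rfl ht.1 (by linarith)).trans ?_
      linarith [show 0 ≤ N * Real.exp (t / h) by positivity]
    · have hmem : t - h ∈ Set.Icc 0 T := ⟨by linarith, by linarith [ht.2]⟩
      have back := ih hmem (by push_cast at hn; linarith)
      have hexp : 2 * Real.exp ((t - h) / h) ≤ Real.exp (t / h) := by
        have two_le : 2 ≤ Real.exp 1 := by linarith [Real.add_one_le_exp (1 : ℝ)]
        calc 2 * Real.exp ((t - h) / h) ≤ Real.exp 1 * Real.exp ((t - h) / h) := by gcongr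
          _ = Real.exp (t / h) := by rw [← Real.exp_add, sub_div, div_self hh.ne']; ring_nf
      calc ‖z t - z 0‖
          ≤ ‖z t - z (t - h)‖ + ‖z (t - h) - z 0‖ := norm_sub_le_norm_sub_add_norm_sub ..
        _ ≤ N * Real.exp (t / h) + 2 * N * Real.exp ((t - h) / h) :=
          add_le_add (window hmem.1 (by linarith) (by linarith)) back
        _ = N * Real.exp (t / h) + N * (2 * Real.exp ((t - h) / h)) := by ring
        _ ≤ N * Real.exp (t / h) + N * Real.exp (t / h) := by gcongr
        _ = 2 * N * Real.exp (t / h) := by ring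

lemma norm_sub_le_of_eq_at_zero (hz : IsWeightedHolder T h β N (z₁ - z₂)) (h0 : z₁ 0 = z₂ 0)
    (hh : 0 < h) (hh1 : h ≤ 1) {t : ℝ} (ht : t ∈ Set.Icc 0 T) :
    ‖z₁ t - z₂ t‖ ≤ 2 * N * Real.exp (t / h) := by
  simpa [h0] using hz.norm_sub_zero_le hh hh1 ht

lemma holderOnWith_window (hz : IsWeightedHolder T h β N z) (hh : 0 < h) {s t : ℝ} (hs : 0 ≤ s)
    (htT : t ≤ T) (hsh : t - s ≤ h) :
    HolderOnWith (N * (Real.exp (t / h)).toNNReal) β z (Set.Icc s t) := by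
  refine holderOnWith_iff_norm_sub_le.2 fun u hu v hv huv => ?_
  refine (hz (hs.trans hu.1) huv (hv.2.trans htT) (by linarith [hu.1, hv.2])).trans ?_
  have hvt := hv.2
  rw [NNReal.coe_mul, Real.coe_toNNReal _ (Real.exp_nonneg _)]
  gcongr

theorem exists_holderOnWith (T : ℝ) (β : ℝ≥0) (hh : 0 < h) (hh1 : h ≤ 1) :
    ∃ C, ∀ (N : ℝ≥0) (z : ℝ → E), IsWeightedHolder T h β N z →
      HolderOnWith (C * N) β z (Set.Icc 0 T) := by
  have hC : 0 ≤ 4 * Real.exp (T / h) / h ^ (β : ℝ) := by positivity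
  refine ⟨⟨_, hC⟩, fun N z hz => holderOnWith_iff_norm_sub_le.2 fun s hs t ht hst => ?_⟩
  have hd : 0 ≤ t - s := sub_nonneg.2 hst
  have htT := ht.2
  change _ ≤ 4 * Real.exp (T / h) / h ^ (β : ℝ) * N * (t - s) ^ (β : ℝ)
  rcases le_total (t - s) h with hsh | hhs
  · have hhβ : h ^ (β : ℝ) ≤ 1 := Real.rpow_le_one hh.le hh1 β.coe_nonneg
    have : Real.exp (T / h) ≤ 4 * Real.exp (T / h) / h ^ (β : ℝ) := by
      rw [le_div_iff₀ (by positivity)]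
      nlinarith [Real.exp_pos (T / h)]
    calc ‖z t - z s‖ ≤ N * Real.exp (t / h) * (t - s) ^ (β : ℝ) := hz hs.1 hst htT hsh
      _ ≤ N * (4 * Real.exp (T / h) / h ^ (β : ℝ)) * (t - s) ^ (β : ℝ) := by
        gcongr
        exact le_trans (by gcongr) this
      _ = _ := by ring
  · have sup {u : ℝ} (hu : u ∈ Set.Icc 0 T) : ‖z u - z 0‖ ≤ 2 * N * Real.exp (T / h) := by
      refine (hz.norm_sub_zero_le hh hh1 hu).trans ?_
      have := hu.2
      gcongr
    have one_le : 1 ≤ ((t - s) / h) ^ (β : ℝ) :=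
      Real.one_le_rpow ((one_le_div hh).2 hhs) β.coe_nonneg
    calc ‖z t - z s‖ = ‖z t - z 0 - (z s - z 0)‖ := by rw [sub_sub_sub_cancel_right]
      _ ≤ 2 * N * Real.exp (T / h) + 2 * N * Real.exp (T / h) :=
        norm_sub_le_of_le (sup ht) (sup hs)
      _ = 4 * N * Real.exp (T / h) * 1 := by ring
      _ ≤ 4 * N * Real.exp (T / h) * ((t - s) / h) ^ (β : ℝ) := by gcongr
      _ = _ := by rw [Real.div_rpow hd hh.le]; ring

lemma eqOn_of_forall_div_two_pow (hz : ∀ n : ℕ, IsWeightedHolder T h β (N / 2 ^ n) z)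
    (hh : 0 < h) (hh1 : h ≤ 1) :
    EqOn z (fun _ => z 0) (Set.Icc 0 T) := by
  intro t ht
  have bound (n : ℕ) : ‖z t - z 0‖ ≤ 2 * N * Real.exp (t / h) / 2 ^ n := by
    refine ((hz n).norm_sub_zero_le hh hh1 ht).trans_eq ?_
    push_cast
    ring
  have lim : Tendsto (fun n : ℕ => 2 * N * Real.exp (t / h) / 2 ^ n) atTop (𝓝 0) :=
    tendsto_const_nhds.div_atTop (tendsto_pow_atTop_atTop_of_one_lt one_lt_two)
  exact sub_eq_zero.1 (norm_le_zero_iff.1 (ge_of_tendsto' lim bound))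

theorem exists_tendsto [CompleteSpace E] {X : ℕ → ℝ → E}
    (hX : ∀ n, IsWeightedHolder T h β (N / 2 ^ n) (X (n + 1) - X n))
    (hX0 : ∀ n, X n 0 = X 0 0) (hh : 0 < h) (hh1 : h ≤ 1) :
    ∃ x : ℝ → E, (∀ t ∈ Set.Icc 0 T, Tendsto (X · t) atTop (𝓝 (x t))) ∧
      ∀ n, IsWeightedHolder T h β (2 * N / 2 ^ n) (X n - x) := by
  have exists_limit : ∀ t ∈ Set.Icc 0 T, ∃ l, Tendsto (X · t) atTop (𝓝 l) := by
    refine fun t ht => cauchySeq_tendsto_of_complete <|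
      cauchySeq_of_le_geometric_two (C := 2 * (2 * N * Real.exp (t / h))) fun n => ?_
    rw [dist_comm, dist_eq_norm]
    refine ((hX n).norm_sub_le_of_eq_at_zero ((hX0 _).trans (hX0 n).symm) hh hh1 ht).trans_eq ?_
    push_cast
    ring
  choose! x hx using exists_limit
  refine ⟨x, hx, fun n s t hs hst htT hsh => ?_⟩
  have := dist_le_of_le_geometric_two_of_tendsto
    (C := 2 * (N * Real.exp (t / h) * (t - s) ^ (β : ℝ))) (f := fun n => X n t - X n s) ?_
    ((hx t ⟨hs.trans hst, htT⟩).sub (hx s ⟨hs, hst.trans htT⟩)) n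
  · rw [Pi.sub_apply, Pi.sub_apply, sub_sub_sub_comm, ← dist_eq_norm]
    refine this.trans_eq ?_
    push_cast
    ring
  · intro m
    rw [dist_comm, dist_eq_norm, sub_sub_sub_comm]
    refine (hX m hs hst htT hsh).trans_eq ?_
    push_cast
    ring

end IsWeightedHolder

lemma isWeightedHolder_of_holderOnWith (hz : HolderOnWith N β z (Set.Icc 0 T)) (hh : 0 < h) :
    IsWeightedHolder T h β N z := by
  intro s t hs hst htT _
  have one_le : 1 ≤ Real.exp (t / h) := Real.one_le_exp (div_nonneg (hs.trans hst) hh.le)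
  have := holderOnWith_iff_norm_sub_le.1 hz s ⟨hs, hst.trans htT⟩ t ⟨hs.trans hst, htT⟩ hst
  refine this.trans ?_
  gcongr
  exact le_mul_of_one_le_right N.coe_nonneg one_le

end WeightedHolder

lemma rpow_le_rpow_sub_mul_rpow {d h p q e : ℝ} (hd : 0 ≤ d) (hdh : d ≤ h) (hh1 : h ≤ 1)
    (hp : 0 < p) (hpq : p ≤ q) (hqe : q ≤ e) : d ^ e ≤ h ^ (q - p) * d ^ p := by
  calc d ^ e ≤ d ^ q := Real.rpow_le_rpow_of_exponent_ge_of_imp hd (hdh.trans hh1) hqe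
        fun _ hq => absurd hq (hp.trans_le (hpq.trans hqe)).ne'
    _ = d ^ (q - p) * d ^ p := by
      rw [← Real.rpow_add_of_nonneg hd (sub_nonneg.2 hpq) hp.le, sub_add_cancel]
    _ ≤ h ^ (q - p) * d ^ p := by
      gcongr

lemma eventually_rpow_mul_le {e ρ : ℝ} (he : 0 < e) (M : ℝ) (hρ : 0 < ρ) :
    ∀ᶠ h in 𝓝[>] 0, h ^ e * M ≤ ρ := by
  have := (tendsto_mul_rpow_mul_nhds_zero he 1 M).mono_left (nhdsWithin_le_nhds (s := Ioi 0))
  simpa using this.eventually (ge_mem_nhds hρ)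

section Primitive

variable {φ φ₁ φ₂ f f₁ f₂ g p p₁ p₂ : ℝ → ℝ} {β γ K G : ℝ≥0} {c c₁ c₂ T : ℝ}

/-- `p t = c + ∫₀ᵗ φ dτ + ∫₀ᵗ f dg` on `[0, T]`. -/
def IsYoungPrimitive (φ f g : ℝ → ℝ) (c T : ℝ) (p : ℝ → ℝ) : Prop :=
  ∀ t ∈ Set.Icc 0 T, ∃ I, IsRSIntegral f g 0 t I ∧ p t = c + (∫ τ in 0..t, φ τ) + I

lemma exists_isYoungPrimitive (φ : ℝ → ℝ) (c : ℝ) (hf : HolderOnWith K β f (Set.Icc 0 T))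
    (hg : HolderOnWith G γ g (Set.Icc 0 T)) (hβγ : 1 < (β + γ : ℝ)) :
    ∃ p, IsYoungPrimitive φ f g c T p := by
  have exists_integral : ∀ t ∈ Set.Icc 0 T, ∃ I, IsRSIntegral f g 0 t I := fun t ht =>
    exists_isRSIntegral (hf.mono (Set.Icc_subset_Icc_right ht.2))
      (hg.mono (Set.Icc_subset_Icc_right ht.2)) hβγ
  choose! I hI using exists_integral
  exact ⟨fun t => c + (∫ τ in 0..t, φ τ) + I t, fun t ht => ⟨I t, hI t ht, rfl⟩⟩

lemma intervalIntegrable_of_continuousOn_Icc {s t : ℝ} (hφ : ContinuousOn φ (Set.Icc 0 T))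
    (hs : s ∈ Set.Icc 0 T) (ht : t ∈ Set.Icc 0 T) :
    IntervalIntegrable φ MeasureTheory.volume s t :=
  (hφ.mono (Set.uIcc_subset_Icc hs ht)).intervalIntegrable

namespace IsYoungPrimitive

lemma apply_zero (hp : IsYoungPrimitive φ f g c T p) (hT : 0 ≤ T) : p 0 = c := by
  obtain ⟨I, hI, hp0⟩ := hp 0 (left_mem_Icc.2 hT)
  rw [hp0, hI.unique le_rfl isRSIntegral_self, integral_same, add_zero, add_zero]

lemma sub (hp₁ : IsYoungPrimitive φ₁ f₁ g c₁ T p₁) (hp₂ : IsYoungPrimitive φ₂ f₂ g c₂ T p₂)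
    (hφ₁ : ContinuousOn φ₁ (Set.Icc 0 T)) (hφ₂ : ContinuousOn φ₂ (Set.Icc 0 T)) :
    IsYoungPrimitive (φ₁ - φ₂) (f₁ - f₂) g (c₁ - c₂) T (p₁ - p₂) := by
  intro t ht
  obtain ⟨I₁, hI₁, h₁⟩ := hp₁ t ht
  obtain ⟨I₂, hI₂, h₂⟩ := hp₂ t ht
  have h0 : (0 : ℝ) ∈ Set.Icc 0 T := ⟨le_rfl, ht.1.trans ht.2⟩
  refine ⟨I₁ - I₂, hI₁.sub hI₂, ?_⟩
  simp only [Pi.sub_apply]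
  rw [h₁, h₂, integral_sub (intervalIntegrable_of_continuousOn_Icc hφ₁ h0 ht)
    (intervalIntegrable_of_continuousOn_Icc hφ₂ h0 ht)]
  ring

lemma exists_sub_eq (hp : IsYoungPrimitive φ f g c T p) (hφ : ContinuousOn φ (Set.Icc 0 T))
    (hf : HolderOnWith K β f (Set.Icc 0 T)) (hg : HolderOnWith G γ g (Set.Icc 0 T))
    (hβγ : 1 < (β + γ : ℝ)) {s t : ℝ} (hs : 0 ≤ s) (hst : s ≤ t) (htT : t ≤ T) :
    ∃ I, IsRSIntegral f g s t I ∧ p t - p s = (∫ τ in s..t, φ τ) + I := by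
  have hs_mem : s ∈ Set.Icc 0 T := ⟨hs, hst.trans htT⟩
  have ht_mem : t ∈ Set.Icc 0 T := ⟨hs.trans hst, htT⟩
  have h0 : (0 : ℝ) ∈ Set.Icc 0 T := ⟨le_rfl, hs_mem.1.trans hs_mem.2⟩
  obtain ⟨Is, hIs, hps⟩ := hp s hs_mem
  obtain ⟨It, hIt, hpt⟩ := hp t ht_mem
  refine ⟨It - Is, hIs.sub_left hs hst hIt (hf.mono (Set.Icc_subset_Icc_right htT))
    (hg.mono (Set.Icc_subset_Icc_right htT)) hβγ, ?_⟩
  rw [hps, hpt, ← integral_add_adjacent_intervals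
    (intervalIntegrable_of_continuousOn_Icc hφ h0 hs_mem)
    (intervalIntegrable_of_continuousOn_Icc hφ hs_mem ht_mem)]
  ring

lemma abs_sub_le {C : ℝ≥0} {M₁ M₂ s t : ℝ} (hp : IsYoungPrimitive φ f g c T p)
    (hφ : ContinuousOn φ (Set.Icc 0 T)) (hf : HolderOnWith C β f (Set.Icc 0 T))
    (hg : HolderOnWith G γ g (Set.Icc 0 T)) (hβγ : 1 < (β + γ : ℝ))
    (hs : 0 ≤ s) (hst : s ≤ t) (htT : t ≤ T) (hφ_le : ∀ τ ∈ Set.Icc s t, |φ τ| ≤ M₁)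
    (hf_le : |f s| ≤ M₂) (hf_window : HolderOnWith K β f (Set.Icc s t)) :
    |p t - p s| ≤ M₁ * (t - s) + M₂ * (G * (t - s) ^ (γ : ℝ)) +
      sewingConst (β + γ) * (K * G) * (t - s) ^ (β + γ : ℝ) := by
  obtain ⟨I, hI, hpI⟩ := hp.exists_sub_eq hφ hf hg hβγ hs hst htT
  have hg_window := hg.mono (Set.Icc_subset_Icc hs htT)
  have drift : |∫ τ in s..t, φ τ| ≤ M₁ * (t - s) := by
    rw [← abs_of_nonneg (sub_nonneg.2 hst)]
    exact norm_integral_le_of_norm_le_const (f := φ) fun τ hτ =>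
      hφ_le τ (Ioc_subset_Icc_self (Set.uIoc_of_le hst ▸ hτ))
  have germ : |youngGerm f g s t| ≤ M₂ * (G * (t - s) ^ (γ : ℝ)) := by
    rw [youngGerm, abs_mul]
    exact mul_le_mul hf_le
      (holderOnWith_iff_norm_sub_le.1 hg_window s ⟨le_rfl, hst⟩ t ⟨hst, le_rfl⟩ hst)
      (abs_nonneg _) ((abs_nonneg _).trans hf_le)
  calc |p t - p s| = |(∫ τ in s..t, φ τ) + youngGerm f g s t + (I - youngGerm f g s t)| := by
        rw [hpI]; ring_nf
    _ ≤ _ := (abs_add_three _ _ _).trans <|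
      add_le_add (add_le_add drift germ) (hI.abs_sub_youngGerm_le hst hf_window hg_window hβγ)

theorem isWeightedHolder {h : ℝ} {a₁ a₂ N : ℝ≥0} (hp : IsYoungPrimitive φ f g c T p)
    (hφ : ContinuousOn φ (Set.Icc 0 T)) (hg : HolderOnWith G γ g (Set.Icc 0 T))
    (hφ_le : ∀ t ∈ Set.Icc 0 T, |φ t| ≤ a₁ * Real.exp (t / h))
    (hf_le : ∀ t ∈ Set.Icc 0 T, |f t| ≤ a₂ * Real.exp (t / h))
    (hf : IsWeightedHolder T h β K f) (hβγ : 1 < (β + γ : ℝ)) (hβ : β ≤ γ) (hγ : γ ≤ 1)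
    (hh : 0 < h) (hh1 : h ≤ 1)
    (hN : h ^ (γ - β : ℝ) * (a₁ + a₂ * G + sewingConst (β + γ) * (K * G)) ≤ N) :
    IsWeightedHolder T h β N p := by
  intro s t hs hst htT hsh
  have hγ1 : (γ : ℝ) ≤ 1 := hγ
  obtain ⟨C, hC⟩ := IsWeightedHolder.exists_holderOnWith (E := ℝ) T β hh hh1
  set d := t - s
  set w := Real.exp (t / h)
  have hd : 0 ≤ d := sub_nonneg.2 hst
  have weight_le {u : ℝ} (hut : u ≤ t) (a : ℝ≥0) : a * Real.exp (u / h) ≤ a * w := by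
    simp only [w]
    gcongr
  have gain {e : ℝ} (he : γ ≤ e) : d ^ e ≤ h ^ (γ - β : ℝ) * d ^ (β : ℝ) :=
    rpow_le_rpow_sub_mul_rpow hd hsh hh1 (by linarith) hβ he
  have increment := hp.abs_sub_le hφ (hC K f hf) hg hβγ hs hst htT
    (fun τ hτ => (hφ_le τ ⟨hs.trans hτ.1, hτ.2.trans htT⟩).trans (weight_le hτ.2 a₁))
    ((hf_le s ⟨hs, hst.trans htT⟩).trans (weight_le hst a₂))
    (hf.holderOnWith_window hh hs htT hsh)
  rw [NNReal.coe_mul, Real.coe_toNNReal _ (Real.exp_nonneg _)] at increment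
  have hsew := sewingConst_pos hβγ
  calc ‖p t - p s‖ ≤ a₁ * w * d ^ (1 : ℝ) + a₂ * w * (G * d ^ (γ : ℝ)) +
        sewingConst (β + γ) * (K * w * G) * d ^ (β + γ : ℝ) := by rwa [Real.rpow_one]
    _ ≤ a₁ * w * (h ^ (γ - β : ℝ) * d ^ (β : ℝ)) +
        a₂ * w * (G * (h ^ (γ - β : ℝ) * d ^ (β : ℝ))) +
        sewingConst (β + γ) * (K * w * G) * (h ^ (γ - β : ℝ) * d ^ (β : ℝ)) := by
      gcongr
      exacts [gain hγ1, gain le_rfl, gain (by simp)]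
    _ = h ^ (γ - β : ℝ) * (a₁ + a₂ * G + sewingConst (β + γ) * (K * G)) *
        (w * d ^ (β : ℝ)) := by ring
    _ ≤ N * (w * d ^ (β : ℝ)) := by gcongr
    _ = N * w * d ^ (β : ℝ) := by ring

end IsYoungPrimitive

end Primitive

section Coefficients

variable {a a' : ℝ → ℝ → ℝ} {x y : ℝ → ℝ} {S S' β N R : ℝ≥0} {T h : ℝ}

/-- `a` is globally Lipschitz in time and space jointly, for the `ℓ¹` distance on `ℝ × ℝ`. -/
def IsJointlyLipschitz (S : ℝ≥0) (a : ℝ → ℝ → ℝ) : Prop :=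
  ∀ t₁ x₁ t₂ x₂ : ℝ, |a t₂ x₂ - a t₁ x₁| ≤ S * (|t₂ - t₁| + |x₂ - x₁|)

lemma exists_isJointlyLipschitz
    (ha : ∃ S : ℝ, ∀ t₁ x₁ t₂ x₂ : ℝ, |a t₂ x₂ - a t₁ x₁| ≤ S * (|t₂ - t₁| + |x₂ - x₁|)) :
    ∃ S, IsJointlyLipschitz S a := by
  obtain ⟨S, hS⟩ := ha
  refine ⟨S.toNNReal, fun t₁ x₁ t₂ x₂ => (hS t₁ x₁ t₂ x₂).trans ?_⟩
  gcongr
  exact Real.le_coe_toNNReal S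

lemma abs_image_sub_sub_le_of_hasDerivAt {f₁ f₁' f₂ f₂' : ℝ → ℝ} {M L x₁ y₁ x₂ y₂ : ℝ}
    (hf₁ : ∀ u, HasDerivAt f₁ (f₁' u) u) (hf₂ : ∀ u, HasDerivAt f₂ (f₂' u) u)
    (hM : ∀ u, |f₁' u| ≤ M)
    (hL : ∀ r ∈ Ico (0 : ℝ) 1, |f₁' (y₁ + r * (x₁ - y₁)) - f₂' (y₂ + r * (x₂ - y₂))| ≤ L) :
    |f₁ x₁ - f₁ y₁ - (f₂ x₂ - f₂ y₂)| ≤ M * |x₁ - y₁ - (x₂ - y₂)| + L * |x₂ - y₂| := by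
  have segment_deriv (u v r : ℝ) : HasDerivAt (fun r => v + r * (u - v)) (u - v) r := by
    simpa using ((hasDerivAt_id r).mul_const (u - v)).const_add v
  have deriv_le : ∀ r ∈ Ico (0 : ℝ) 1,
      ‖f₁' (y₁ + r * (x₁ - y₁)) * (x₁ - y₁) - f₂' (y₂ + r * (x₂ - y₂)) * (x₂ - y₂)‖ ≤
        M * |x₁ - y₁ - (x₂ - y₂)| + L * |x₂ - y₂| := by
    intro r hr
    set u := f₁' (y₁ + r * (x₁ - y₁))
    set v := f₂' (y₂ + r * (x₂ - y₂))
    calc ‖u * (x₁ - y₁) - v * (x₂ - y₂)‖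
        = |u * (x₁ - y₁ - (x₂ - y₂)) + (u - v) * (x₂ - y₂)| := by
          rw [Real.norm_eq_abs]; ring_nf
      _ ≤ |u| * |x₁ - y₁ - (x₂ - y₂)| + |u - v| * |x₂ - y₂| := by
          rw [← abs_mul, ← abs_mul]; exact abs_add_le _ _
      _ ≤ _ := by
          gcongr
          exacts [hM _, hL r hr]
  have := norm_image_sub_le_of_norm_deriv_le_segment_01' (fun r _ =>
    (((hf₁ _).comp r (segment_deriv x₁ y₁ r)).sub
      ((hf₂ _).comp r (segment_deriv x₂ y₂ r))).hasDerivWithinAt) deriv_le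
  simpa [sub_sub_sub_comm] using this

namespace IsJointlyLipschitz

lemma lipschitzWith (ha : IsJointlyLipschitz S a) (t : ℝ) : LipschitzWith S (a t) :=
  LipschitzWith.of_dist_le_mul fun u v => by simpa [Real.dist_eq] using ha t v t u

lemma continuousOn_comp {I : Set ℝ} (ha : IsJointlyLipschitz S a) (hx : ContinuousOn x I) :
    ContinuousOn (fun t => a t (x t)) I := by
  intro s hs
  have bound : Tendsto (fun t => S * (|t - s| + |x t - x s|)) (𝓝[I] s) (𝓝 0) := by
    have ht : Tendsto (fun t => |t - s|) (𝓝[I] s) (𝓝 0) := by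
      simpa using ((continuousWithinAt_id (x := s) (s := I)).sub_const s).abs
    have hxt : Tendsto (fun t => |x t - x s|) (𝓝[I] s) (𝓝 0) := by
      simpa using ((hx s hs).sub_const (x s)).abs
    simpa using (ht.add hxt).const_mul (S : ℝ)
  exact tendsto_iff_dist_tendsto_zero.2 <|
    squeeze_zero (fun _ => dist_nonneg) (fun t => ha s (x s) t (x t)) bound

lemma abs_comp_le (ha : IsJointlyLipschitz S a) (hx : IsWeightedHolder T h β N x) (hh : 0 < h)
    (hh1 : h ≤ 1) {t : ℝ} (ht : t ∈ Set.Icc 0 T) :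
    |a t (x t)| ≤ (‖a 0 (x 0)‖₊ + S * (1 + 2 * N)) * Real.exp (t / h) := by
  have one_le : 1 ≤ Real.exp (t / h) := Real.one_le_exp (div_nonneg ht.1 hh.le)
  have le_exp : t ≤ Real.exp (t / h) := by
    linarith [le_div_self ht.1 hh hh1, Real.add_one_le_exp (t / h)]
  calc |a t (x t)| ≤ |a 0 (x 0)| + |a t (x t) - a 0 (x 0)| := by
        linarith [abs_sub_abs_le_abs_sub (a t (x t)) (a 0 (x 0))]
    _ ≤ |a 0 (x 0)| + S * (|t - 0| + |x t - x 0|) := by gcongr; exact ha _ _ _ _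
    _ ≤ |a 0 (x 0)| * Real.exp (t / h) +
        S * (Real.exp (t / h) + 2 * N * Real.exp (t / h)) := by
      rw [sub_zero, abs_of_nonneg ht.1]
      gcongr
      · exact le_mul_of_one_le_right (abs_nonneg _) one_le
      · exact hx.norm_sub_zero_le hh hh1 ht
    _ = _ := by rw [coe_nnnorm, Real.norm_eq_abs]; ring

lemma isWeightedHolder_comp (ha : IsJointlyLipschitz S a) (hx : IsWeightedHolder T h β N x)
    (hβ1 : β ≤ 1) (hh : 0 < h) (hh1 : h ≤ 1) :
    IsWeightedHolder T h β (S * (1 + N)) fun t => a t (x t) := by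
  intro s t hs hst htT hsh
  have one_le : 1 ≤ Real.exp (t / h) := Real.one_le_exp (div_nonneg (hs.trans hst) hh.le)
  have hd : 0 ≤ t - s := sub_nonneg.2 hst
  have le_rpow : t - s ≤ Real.exp (t / h) * (t - s) ^ (β : ℝ) :=
    (Real.self_le_rpow_of_le_one hd (hsh.trans hh1) hβ1).trans
      (le_mul_of_one_le_left (Real.rpow_nonneg hd _) one_le)
  calc ‖a t (x t) - a s (x s)‖ ≤ S * (|t - s| + |x t - x s|) := ha _ _ _ _
    _ ≤ S * (Real.exp (t / h) * (t - s) ^ (β : ℝ) +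
        N * Real.exp (t / h) * (t - s) ^ (β : ℝ)) := by
      rw [abs_of_nonneg hd]
      gcongr
      exact hx hs hst htT hsh
    _ = _ := by push_cast; ring

lemma abs_comp_sub_comp_le (ha : IsJointlyLipschitz S a) (h0 : x 0 = y 0)
    (hxy : IsWeightedHolder T h β N (x - y)) (hh : 0 < h) (hh1 : h ≤ 1) {t : ℝ}
    (ht : t ∈ Set.Icc 0 T) :
    |a t (x t) - a t (y t)| ≤ (2 * S * N) * Real.exp (t / h) := by
  calc |a t (x t) - a t (y t)| ≤ S * (|t - t| + |x t - y t|) := ha _ _ _ _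
    _ ≤ S * (0 + 2 * N * Real.exp (t / h)) := by
      rw [sub_self, abs_zero]
      gcongr
      exact hxy.norm_sub_le_of_eq_at_zero h0 hh hh1 ht
    _ = _ := by ring

lemma abs_sub_sub_sub_le (ha : IsJointlyLipschitz S a) (ha' : IsJointlyLipschitz S' a')
    (hderiv : ∀ t u, HasDerivAt (a t) (a' t u) u) (t₁ x₁ y₁ t₂ x₂ y₂ : ℝ) :
    |a t₁ x₁ - a t₁ y₁ - (a t₂ x₂ - a t₂ y₂)| ≤ S * |x₁ - y₁ - (x₂ - y₂)| +
      S' * (|t₁ - t₂| + |x₁ - x₂| + |y₁ - y₂|) * |x₂ - y₂| := by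
  refine abs_image_sub_sub_le_of_hasDerivAt (hderiv t₁) (hderiv t₂) (fun u => ?_)
    fun r hr => (ha' _ _ _ _).trans ?_
  · exact (hderiv t₁ u).le_of_lipschitz (ha.lipschitzWith t₁)
  · have split : y₁ + r * (x₁ - y₁) - (y₂ + r * (x₂ - y₂)) =
        r * (x₁ - x₂) + (1 - r) * (y₁ - y₂) := by ring
    have hx : |r * (x₁ - x₂)| ≤ |x₁ - x₂| := by
      rw [abs_mul, abs_of_nonneg hr.1]
      exact mul_le_of_le_one_left (abs_nonneg _) hr.2.le
    have hy : |(1 - r) * (y₁ - y₂)| ≤ |y₁ - y₂| := by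
      rw [abs_mul, abs_of_nonneg (sub_nonneg.2 hr.2.le)]
      exact mul_le_of_le_one_left (abs_nonneg _) (by linarith [hr.1])
    rw [split, add_assoc]
    gcongr
    exact (abs_add_le _ _).trans (add_le_add hx hy)

theorem isWeightedHolder_comp_sub_comp (ha : IsJointlyLipschitz S a)
    (ha' : IsJointlyLipschitz S' a') (hderiv : ∀ t u, HasDerivAt (a t) (a' t u) u)
    (h0 : x 0 = y 0) (hx : HolderOnWith R β x (Set.Icc 0 T))
    (hy : HolderOnWith R β y (Set.Icc 0 T)) (hxy : IsWeightedHolder T h β N (x - y))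
    (hβ1 : β ≤ 1) (hh : 0 < h) (hh1 : h ≤ 1) :
    IsWeightedHolder T h β ((S + 2 * S' * (1 + 2 * R)) * N)
      ((fun t => a t (x t)) - fun t => a t (y t)) := by
  intro s t hs hst htT hsh
  have hs_mem : s ∈ Set.Icc 0 T := ⟨hs, hst.trans htT⟩
  have ht_mem : t ∈ Set.Icc 0 T := ⟨hs.trans hst, htT⟩
  have hd : 0 ≤ t - s := sub_nonneg.2 hst
  have sup : |x s - y s| ≤ 2 * N * Real.exp (t / h) :=
    (hxy.norm_sub_le_of_eq_at_zero h0 hh hh1 hs_mem).trans (by gcongr)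
  have increments : |t - s| + |x t - x s| + |y t - y s| ≤ (1 + 2 * R) * (t - s) ^ (β : ℝ) := by
    have h₁ : t - s ≤ (t - s) ^ (β : ℝ) := Real.self_le_rpow_of_le_one hd (hsh.trans hh1) hβ1
    have h₂ := holderOnWith_iff_norm_sub_le.1 hx s hs_mem t ht_mem hst
    have h₃ := holderOnWith_iff_norm_sub_le.1 hy s hs_mem t ht_mem hst
    rw [Real.norm_eq_abs] at h₂ h₃
    rw [abs_of_nonneg hd]
    linarith
  have difference : |x t - y t - (x s - y s)| ≤ N * Real.exp (t / h) * (t - s) ^ (β : ℝ) :=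
    hxy hs hst htT hsh
  calc ‖a t (x t) - a t (y t) - (a s (x s) - a s (y s))‖
      ≤ S * |x t - y t - (x s - y s)| +
        S' * (|t - s| + |x t - x s| + |y t - y s|) * |x s - y s| :=
        ha.abs_sub_sub_sub_le ha' hderiv _ _ _ _ _ _
    _ ≤ S * (N * Real.exp (t / h) * (t - s) ^ (β : ℝ)) +
        S' * ((1 + 2 * R) * (t - s) ^ (β : ℝ)) * (2 * N * Real.exp (t / h)) := by gcongr
    _ = _ := by push_cast; ring

end IsJointlyLipschitz

end Coefficients

section Picard

variable {b σ σx : ℝ → ℝ → ℝ} {g x y : ℝ → ℝ} {x₀ T : ℝ} {β γ B S S' G C R : ℝ≥0}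

/-- `p` is the image of `x` under the Picard map of the equation, that is
`p t = x₀ + ∫₀ᵗ b(τ, x τ) dτ + ∫₀ᵗ σ(τ, x τ) dg(τ)` on `[0, T]`; solutions are its fixed points. -/
def IsPicardStep (b σ : ℝ → ℝ → ℝ) (g : ℝ → ℝ) (x₀ T : ℝ) (x p : ℝ → ℝ) : Prop :=
  IsYoungPrimitive (fun τ => b τ (x τ)) (fun τ => σ τ (x τ)) g x₀ T p

lemma exists_holderOnWith_iff {z : ℝ → ℝ} {I : Set ℝ} :
    (∃ C : ℝ, ∀ s ∈ I, ∀ t ∈ I, |z t - z s| ≤ C * |t - s| ^ (β : ℝ)) ↔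
      ∃ C, HolderOnWith C β z I := by
  constructor
  · rintro ⟨C, hC⟩
    refine ⟨C.toNNReal, holderOnWith_iff_norm_sub_le.2 fun s hs t ht hst => ?_⟩
    refine (hC s hs t ht).trans ?_
    rw [abs_of_nonneg (sub_nonneg.2 hst)]
    have := Real.rpow_nonneg (sub_nonneg.2 hst) β
    gcongr
    exact Real.le_coe_toNNReal C
  · rintro ⟨C, hC⟩
    exact ⟨C, fun s hs t ht => hC.dist_le ht hs⟩

lemma isSolution_iff : IsSolution b σ g x₀ T β x ↔
    (∃ C, HolderOnWith C β x (Set.Icc 0 T)) ∧ IsPicardStep b σ g x₀ T x x :=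
  and_congr_left' exists_holderOnWith_iff

lemma eventually_pos_and_le_one : ∀ᶠ h : ℝ in 𝓝[>] 0, 0 < h ∧ h ≤ 1 :=
  Ioc_mem_nhdsGT one_pos

lemma pos_of_one_lt_add (hβγ : 1 < (β + γ : ℝ)) (hγ : γ ≤ 1) : 0 < β := by
  have : (γ : ℝ) ≤ 1 := hγ
  exact_mod_cast (by linarith : (0 : ℝ) < β)

lemma exists_isPicardStep (hσ : IsJointlyLipschitz S σ) (hg : HolderOnWith G γ g (Set.Icc 0 T))
    (hβγ : 1 < (β + γ : ℝ)) (hβ1 : β ≤ 1) (hx : HolderOnWith C β x (Set.Icc 0 T)) :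
    ∃ p, IsPicardStep b σ g x₀ T x p := by
  obtain ⟨K, hK⟩ := IsWeightedHolder.exists_holderOnWith (E := ℝ) T β one_pos le_rfl
  exact exists_isYoungPrimitive _ _ (hK _ _ (hσ.isWeightedHolder_comp
    (isWeightedHolder_of_holderOnWith hx one_pos) hβ1 one_pos le_rfl)) hg hβγ

theorem eventually_isPicardStep_isWeightedHolder_one (hb : IsJointlyLipschitz B b)
    (hσ : IsJointlyLipschitz S σ) (hg : HolderOnWith G γ g (Set.Icc 0 T))
    (hβγ : 1 < (β + γ : ℝ)) (hβ : β < γ) (hγ : γ ≤ 1) (x₀ : ℝ) :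
    ∀ᶠ h in 𝓝[>] 0, ∀ x p : ℝ → ℝ, x 0 = x₀ → IsWeightedHolder T h β 1 x →
      IsPicardStep b σ g x₀ T x p → IsWeightedHolder T h β 1 p := by
  filter_upwards [eventually_pos_and_le_one, eventually_rpow_mul_le (sub_pos.2 hβ)
    ((‖b 0 x₀‖₊ + B * (1 + 2 * 1) : ℝ≥0) + (‖σ 0 x₀‖₊ + S * (1 + 2 * 1) : ℝ≥0) * G +
      sewingConst (β + γ) * ((S * (1 + 1) : ℝ≥0) * G)) one_pos]
    with h ⟨hh, hh1⟩ hsmall x p hx0 hx hp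
  obtain ⟨C, hC⟩ := IsWeightedHolder.exists_holderOnWith (E := ℝ) T β hh hh1
  have hβ_pos := pos_of_one_lt_add hβγ hγ
  have growth {a : ℝ → ℝ → ℝ} {A : ℝ≥0} (ha : IsJointlyLipschitz A a) :
      ∀ t ∈ Set.Icc 0 T, |a t (x t)| ≤
        (‖a 0 x₀‖₊ + A * (1 + 2 * 1) : ℝ≥0) * Real.exp (t / h) := fun t ht => by
    simpa [hx0] using ha.abs_comp_le hx hh hh1 ht
  exact hp.isWeightedHolder (hb.continuousOn_comp ((hC _ _ hx).continuousOn hβ_pos)) hg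
    (growth hb) (growth hσ) (hσ.isWeightedHolder_comp hx (hβ.le.trans hγ) hh hh1) hβγ hβ.le hγ
    hh hh1 hsmall

theorem eventually_isPicardStep_contracting (hb : IsJointlyLipschitz B b)
    (hσ : IsJointlyLipschitz S σ) (hσx : IsJointlyLipschitz S' σx)
    (hderiv : ∀ t u, HasDerivAt (σ t) (σx t u) u) (hg : HolderOnWith G γ g (Set.Icc 0 T))
    (hβγ : 1 < (β + γ : ℝ)) (hβ : β < γ) (hγ : γ ≤ 1) (R : ℝ≥0) (x₀ : ℝ) :
    ∀ᶠ h in 𝓝[>] 0, ∀ (N : ℝ≥0) (x y p q : ℝ → ℝ), x 0 = y 0 →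
      HolderOnWith R β x (Set.Icc 0 T) → HolderOnWith R β y (Set.Icc 0 T) →
      IsPicardStep b σ g x₀ T x p → IsPicardStep b σ g x₀ T y q →
      IsWeightedHolder T h β N (x - y) → IsWeightedHolder T h β (N / 2) (p - q) := by
  filter_upwards [eventually_pos_and_le_one, eventually_rpow_mul_le (sub_pos.2 hβ)
    (2 * B + 2 * S * G + sewingConst (β + γ) * ((S + 2 * S' * (1 + 2 * R)) * G)) one_half_pos]
    with h ⟨hh, hh1⟩ hsmall N x y p q h0 hx hy hp hq hxy
  have hβ_pos := pos_of_one_lt_add hβγ hγ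
  have hbx := hb.continuousOn_comp (hx.continuousOn hβ_pos)
  have hby := hb.continuousOn_comp (hy.continuousOn hβ_pos)
  refine (hp.sub hq hbx hby).isWeightedHolder (hbx.sub hby) hg
    (a₁ := 2 * B * N) (a₂ := 2 * S * N)
    (fun t ht => hb.abs_comp_sub_comp_le h0 hxy hh hh1 ht)
    (fun t ht => hσ.abs_comp_sub_comp_le h0 hxy hh hh1 ht)
    (hσ.isWeightedHolder_comp_sub_comp hσx hderiv h0 hx hy hxy (hβ.le.trans hγ) hh hh1)
    hβγ hβ.le hγ hh hh1 ?_
  calc _ = h ^ (γ - β : ℝ) * (2 * B + 2 * S * G +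
        sewingConst (β + γ) * ((S + 2 * S' * (1 + 2 * R)) * G)) * N := by push_cast; ring
    _ ≤ 1 / 2 * N := by gcongr; exact hsmall
    _ = (N / 2 : ℝ≥0) := by push_cast; ring

theorem IsPicardStep.eqOn (hb : IsJointlyLipschitz B b)
    (hσ : IsJointlyLipschitz S σ) (hσx : IsJointlyLipschitz S' σx)
    (hderiv : ∀ t u, HasDerivAt (σ t) (σx t u) u) (hg : HolderOnWith G γ g (Set.Icc 0 T))
    (hβγ : 1 < (β + γ : ℝ)) (hβ : β < γ) (hγ : γ ≤ 1)
    (hx : HolderOnWith C β x (Set.Icc 0 T)) (hy : HolderOnWith R β y (Set.Icc 0 T))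
    (hxx : IsPicardStep b σ g x₀ T x x) (hyy : IsPicardStep b σ g x₀ T y y) :
    EqOn x y (Set.Icc 0 T) := by
  intro t ht
  have hT : 0 ≤ T := ht.1.trans ht.2
  have h0 : x 0 = y 0 := (hxx.apply_zero hT).trans (hyy.apply_zero hT).symm
  have hx' := hx.mono_const (le_max_left C R)
  have hy' := hy.mono_const (le_max_right C R)
  obtain ⟨h, ⟨hh, hh1⟩, contracting⟩ := (eventually_pos_and_le_one.and
    (eventually_isPicardStep_contracting hb hσ hσx hderiv hg hβγ hβ hγ (max C R) x₀)).exists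
  have halving (n : ℕ) : IsWeightedHolder T h β ((max C R + max C R) / 2 ^ n) (x - y) := by
    induction n with
    | zero =>
      simpa using (isWeightedHolder_of_holderOnWith hx' hh).sub
        (isWeightedHolder_of_holderOnWith hy' hh)
    | succ n ih =>
      rw [pow_succ, ← div_div]
      exact contracting _ x y x y h0 hx' hy' hxx hyy ih
  simpa [h0, sub_eq_zero] using IsWeightedHolder.eqOn_of_forall_div_two_pow halving hh hh1 ht

lemma exists_picard_iterates (hb : IsJointlyLipschitz B b) (hσ : IsJointlyLipschitz S σ)
    (hg : HolderOnWith G γ g (Set.Icc 0 T)) (hβγ : 1 < (β + γ : ℝ)) (hβ : β < γ) (hγ : γ ≤ 1)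
    (hT : 0 ≤ T) (x₀ : ℝ) :
    ∃ (X : ℕ → ℝ → ℝ) (R : ℝ≥0), (∀ n, X n 0 = x₀) ∧
      (∀ n, HolderOnWith R β (X n) (Set.Icc 0 T)) ∧
      ∀ n, IsPicardStep b σ g x₀ T (X n) (X (n + 1)) := by
  obtain ⟨h, ⟨hh, hh1⟩, invariant⟩ := (eventually_pos_and_le_one.and
    (eventually_isPicardStep_isWeightedHolder_one hb hσ hg hβγ hβ hγ x₀)).exists
  obtain ⟨R, hR⟩ := IsWeightedHolder.exists_holderOnWith (E := ℝ) T β hh hh1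
  have step : ∀ x : ℝ → ℝ, x 0 = x₀ ∧ IsWeightedHolder T h β 1 x →
      ∃ p, (p 0 = x₀ ∧ IsWeightedHolder T h β 1 p) ∧ IsPicardStep b σ g x₀ T x p := by
    rintro x ⟨hx0, hx⟩
    obtain ⟨p, hp⟩ := exists_isPicardStep (b := b) (x₀ := x₀) hσ hg hβγ (hβ.le.trans hγ) (hR 1 x hx)
    exact ⟨p, ⟨hp.apply_zero hT, invariant x p hx0 hx hp⟩, hp⟩
  choose! Φ hΦ hΦ_step using step
  have ball (n : ℕ) : Φ^[n] (fun _ => x₀) 0 = x₀ ∧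
      IsWeightedHolder T h β 1 (Φ^[n] fun _ => x₀) := by
    induction n with
    | zero =>
      exact ⟨rfl, isWeightedHolder_of_holderOnWith (HolderWith.const.holderOnWith _) hh⟩
    | succ n ih =>
      rw [Function.iterate_succ_apply']
      exact hΦ _ ih
  refine ⟨fun n => Φ^[n] fun _ => x₀, R * 1, fun n => (ball n).1, fun n => hR 1 _ (ball n).2,
    fun n => ?_⟩
  simp only [Function.iterate_succ_apply']
  exact hΦ_step _ (ball n)

lemma holderOnWith_of_tendsto {z : ℝ → ℝ} {X : ℕ → ℝ → ℝ} {I : Set ℝ}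
    (hX : ∀ n, HolderOnWith C β (X n) I) (hz : ∀ t ∈ I, Tendsto (X · t) atTop (𝓝 (z t))) :
    HolderOnWith C β z I :=
  fun s hs t ht => le_of_tendsto' ((hz s hs).edist (hz t ht)) fun n => hX n s hs t ht

theorem exists_isPicardStep_self (hb : IsJointlyLipschitz B b)
    (hσ : IsJointlyLipschitz S σ) (hσx : IsJointlyLipschitz S' σx)
    (hderiv : ∀ t u, HasDerivAt (σ t) (σx t u) u) (hg : HolderOnWith G γ g (Set.Icc 0 T))
    (hβγ : 1 < (β + γ : ℝ)) (hβ : β < γ) (hγ : γ ≤ 1) (hT : 0 ≤ T) (x₀ : ℝ) :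
    ∃ x, (∃ C, HolderOnWith C β x (Set.Icc 0 T)) ∧ IsPicardStep b σ g x₀ T x x := by
  obtain ⟨X, R, hX0, hXR, hX⟩ := exists_picard_iterates hb hσ hg hβγ hβ hγ hT x₀
  obtain ⟨h, ⟨hh, hh1⟩, contracting⟩ := (eventually_pos_and_le_one.and
    (eventually_isPicardStep_contracting hb hσ hσx hderiv hg hβγ hβ hγ R x₀)).exists
  have halving (n : ℕ) : IsWeightedHolder T h β ((R + R) / 2 ^ n) (X (n + 1) - X n) := by
    induction n with
    | zero =>
      simpa using (isWeightedHolder_of_holderOnWith (hXR 1) hh).sub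
        (isWeightedHolder_of_holderOnWith (hXR 0) hh)
    | succ n ih =>
      rw [pow_succ, ← div_div]
      exact contracting _ _ _ _ _ ((hX0 _).trans (hX0 _).symm) (hXR _) (hXR _) (hX _) (hX _) ih
  obtain ⟨x, hx_lim, hXx⟩ := IsWeightedHolder.exists_tendsto halving
    (fun n => (hX0 n).trans (hX0 0).symm) hh hh1
  have hx0 : x 0 = x₀ := tendsto_nhds_unique (hx_lim 0 ⟨le_rfl, hT⟩) (by simp [hX0])
  have hxR : HolderOnWith R β x (Set.Icc 0 T) := holderOnWith_of_tendsto hXR hx_lim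
  obtain ⟨p, hp⟩ := exists_isPicardStep (b := b) (x₀ := x₀) hσ hg hβγ (hβ.le.trans hγ) hxR
  have hxp (n : ℕ) : IsWeightedHolder T h β (2 * (R + R) / 2 ^ n) (p - x) := by
    have hXp := contracting _ _ _ _ _ ((hX0 n).trans hx0.symm) (hXR n) hxR (hX n) hp (hXx n)
    have := (hXx (n + 1)).sub hXp
    rwa [sub_sub_sub_cancel_left, pow_succ, ← div_div, add_halves] at this
  have hpx : EqOn p x (Set.Icc 0 T) := fun t ht => by
    simpa [hp.apply_zero hT, hx0, sub_eq_zero] using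
      IsWeightedHolder.eqOn_of_forall_div_two_pow hxp hh hh1 ht
  refine ⟨x, ⟨R, hxR⟩, fun t ht => ?_⟩
  obtain ⟨I, hI, hpt⟩ := hp t ht
  exact ⟨I, hI, (hpx ht).symm.trans hpt⟩

end Picard

theorem ode_holder_forcing_existence_uniqueness_general
    (b σ σx : ℝ → ℝ → ℝ) (g : ℝ → ℝ) (γ β T x₀ : ℝ) (hγ1 : γ ≤ 1) (hT : 0 ≤ T)
    (hg : ∃ G : ℝ, ∀ s ∈ Set.Icc 0 T, ∀ t ∈ Set.Icc 0 T, |g t - g s| ≤ G * |t - s| ^ γ)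
    (hb : ∃ B : ℝ, ∀ t₁ x₁ t₂ x₂ : ℝ, |b t₂ x₂ - b t₁ x₁| ≤ B * (|t₂ - t₁| + |x₂ - x₁|))
    (hσ : ∃ S : ℝ, ∀ t₁ x₁ t₂ x₂ : ℝ, |σ t₂ x₂ - σ t₁ x₁| ≤ S * (|t₂ - t₁| + |x₂ - x₁|))
    (hσdx : ∀ t x : ℝ, HasDerivAt (σ t) (σx t x) x)
    (hσx : ∃ S : ℝ, ∀ t₁ x₁ t₂ x₂ : ℝ, |σx t₂ x₂ - σx t₁ x₁| ≤ S * (|t₂ - t₁| + |x₂ - x₁|))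
    (hβ : 1 - γ < β) (hβγ : β < γ) :
    (∃ x, IsSolution b σ g x₀ T β x) ∧
      ∀ x y, IsSolution b σ g x₀ T β x → IsSolution b σ g x₀ T β y → EqOn x y (Set.Icc 0 T) := by
  lift β to ℝ≥0 using by linarith
  lift γ to ℝ≥0 using β.coe_nonneg.trans hβγ.le
  obtain ⟨G, hG⟩ := exists_holderOnWith_iff.1 hg
  obtain ⟨B, hB⟩ := exists_isJointlyLipschitz hb
  obtain ⟨S, hS⟩ := exists_isJointlyLipschitz hσ
  obtain ⟨S', hS'⟩ := exists_isJointlyLipschitz hσx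
  have one_lt_add : 1 < (β + γ : ℝ) := by linarith
  simp only [isSolution_iff]
  refine ⟨exists_isPicardStep_self hB hS hS' hσdx hG one_lt_add hβγ hγ1 hT x₀, ?_⟩
  rintro x y ⟨⟨_, hx⟩, hxx⟩ ⟨⟨_, hy⟩, hyy⟩
  exact IsPicardStep.eqOn hB hS hS' hσdx hG one_lt_add hβγ hγ1 hx hy hxx hyy

/-- Existence and uniqueness for the ODE with `γ`-Hölder forcing, `1/2 < γ ≤ 1`,
`1 − γ < β < γ`: Lipschitz drift `b`, and `C¹` diffusion `σ` with `σ`, `σ'_t`,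
`σ'_x` globally Lipschitz. -/
theorem ode_holder_forcing_existence_uniqueness
    (b σ σt σx : ℝ → ℝ → ℝ) (g : ℝ → ℝ) (γ Cg x₀ : ℝ)
    (hγ : 1 / 2 < γ) (hγ1 : γ ≤ 1)
    (hg : ∀ x y : ℝ, |g x - g y| ≤ Cg * |x - y| ^ γ)
    (hb : ∃ B : ℝ, ∀ t₁ x₁ t₂ x₂ : ℝ,
      |b t₂ x₂ - b t₁ x₁| ≤ B * (|t₂ - t₁| + |x₂ - x₁|))
    (hσdt : ∀ t x : ℝ, HasDerivAt (fun s => σ s x) (σt t x) t)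
    (hσdx : ∀ t x : ℝ, HasDerivAt (fun y => σ t y) (σx t x) x)
    (hσtc : Continuous fun p : ℝ × ℝ => σt p.1 p.2)
    (hσxc : Continuous fun p : ℝ × ℝ => σx p.1 p.2)
    (hσ : ∃ S : ℝ, ∀ t₁ x₁ t₂ x₂ : ℝ,
      |σ t₂ x₂ - σ t₁ x₁| ≤ S * (|t₂ - t₁| + |x₂ - x₁|) ∧
      |σt t₂ x₂ - σt t₁ x₁| ≤ S * (|t₂ - t₁| + |x₂ - x₁|) ∧
      |σx t₂ x₂ - σx t₁ x₁| ≤ S * (|t₂ - t₁| + |x₂ - x₁|)) :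
    ∀ T > (0 : ℝ), ∀ β : ℝ, 1 - γ < β → β < γ →
      (∃ x : ℝ → ℝ, IsSolution b σ g x₀ T β x) ∧
      (∀ x y : ℝ → ℝ, IsSolution b σ g x₀ T β x → IsSolution b σ g x₀ T β y →
        EqOn x y (Icc 0 T)) :=
  fun T hT β hβ hβγ => ode_holder_forcing_existence_uniqueness_general b σ σx g γ β T x₀ hγ1 hT.le
    ⟨Cg, fun s _ t _ => hg t s⟩ hb (hσ.imp fun _ h _ _ _ _ => (h _ _ _ _).1) hσdx
    (hσ.imp fun _ h _ _ _ _ => (h _ _ _ _).2.2) hβ hβγ
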